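/- Let R'(4) be the unital associative ℂ-algebra presented by the same generators C_I and the same relations (R1)–(R4) as R(4), but with relation family (R5) replaced by (R5'): for pairwise distinct i,j,k,ℓ ∈ {1,2,3,4}, 2C_j[C_{ik},C_{kℓ}] + (C_{ij}−C_i−C_j)[C_{kℓ},C_{jk}] + (C_{jℓ}−C_j−C_ℓ)[C_{jk},C_{ik}] − (C_{jk}−C_j−C_k)[C_{ij},C_{jℓ}] = 0. Then the identity map on the generators induces an isomorphism of ℂ-algebras R(4) ≅ R'(4); equivalently, modulo the relations (R1)–(R4), the family of relations (R5) and the family (R5') generate the same two-sided ideal of the free algebra. -/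

import Mathlib

noncomputable section

open Finset

variable {A : Type*} [Ring A] [Algebra ℂ A]

/-- Commutator `[a,b] = ab − ba`. -/
def cm (a b : A) : A := a * b - b * a

/-- Anticommutator `{a,b} = ab + ba`. -/
def acm (a b : A) : A := a * b + b * a

/-- Relations (R1): `[C_I, C_J] = 0` whenever `I ∩ J = ∅`, `I ⊆ J` or `J ⊆ I`. -/
def RelR1 (C : Finset (Fin 4) → A) : Prop :=
  ∀ I J : Finset (Fin 4), (I ∩ J = ∅ ∨ I ⊆ J ∨ J ⊆ I) → cm (C I) (C J) = 0

/-- Relations (R2): `C_I = (1/2)∑_{i≠j∈I} C_{ij} − (|I|−2)∑_{i∈I} C_i` for `|I| ≥ 3`. -/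
def RelR2 (C : Finset (Fin 4) → A) : Prop :=
  ∀ I : Finset (Fin 4), 3 ≤ I.card →
    C I = ((1 : ℂ)/2) • (∑ i ∈ I, ∑ j ∈ I \ {i}, C {i, j})
      - ((I.card : ℂ) - 2) • ∑ i ∈ I, C {i}

/-- Relations (R3), for nonempty pairwise disjoint `I, J, K`. -/
def RelR3 (C : Finset (Fin 4) → A) : Prop :=
  ∀ I J K : Finset (Fin 4), I.Nonempty → J.Nonempty → K.Nonempty →
    Disjoint I J → Disjoint J K → Disjoint I K →
    cm (C (I ∪ J)) (C (J ∪ K)) = cm (C (J ∪ K)) (C (I ∪ K)) ∧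
    cm (C (J ∪ K)) (C (I ∪ K)) = cm (C (I ∪ K)) (C (I ∪ J)) ∧
    cm (C (J ∪ K)) (cm (C (I ∪ J)) (C (J ∪ K))) =
      2 * (C (I ∪ K) * C (J ∪ K)) - 2 * (C (J ∪ K) * C (I ∪ J))
        + 2 * ((C J - C K) * (C (I ∪ J ∪ K) - C I))

/-- Relations (R4), for pairwise distinct `i, j, k, l`. -/
def RelR4 (C : Finset (Fin 4) → A) : Prop :=
  ∀ i j k l : Fin 4, i ≠ j → i ≠ k → i ≠ l → j ≠ k → j ≠ l → k ≠ l →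
    ((1 : ℂ)/2) • cm (C {k, l}) (cm (C {i, j}) (C {j, k})) =
      C {i, k} * C {j, l} - C {i, l} * C {j, k}
      + (C {i} + C {l}) * C {j, k} + (C {j} + C {k}) * C {i, l}
      - (C {j} + C {l}) * C {i, k} - (C {i} + C {k}) * C {j, l}
      + (C {i} - C {j}) * (C {l} - C {k})

/-- Relations (R5), for pairwise distinct `i, j, k, l`. -/
def RelR5 (C : Finset (Fin 4) → A) : Prop :=
  ∀ i j k l : Fin 4, i ≠ j → i ≠ k → i ≠ l → j ≠ k → j ≠ l → k ≠ l →
    ((1 : ℂ)/2) • cm (cm (C {i, j}) (C {j, k})) (cm (C {j, k}) (C {k, l})) =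
      -((cm (C {i, j}) (C {j, l}) + cm (C {i, k}) (C {k, l})) * (C {j, k} - C {j} - C {k}))

/-- The Casimir-type element `w_{I,J,K}` of the Racah algebra. -/
def wElt (C : Finset (Fin 4) → A) (I J K : Finset (Fin 4)) : A :=
  ((1 : ℂ)/4) • (cm (C (I ∪ J)) (C (J ∪ K))) ^ 2
  - ((1 : ℂ)/2) • acm ((C (I ∪ J)) ^ 2) (C (J ∪ K))
  - ((1 : ℂ)/2) • acm (C (I ∪ J)) ((C (J ∪ K)) ^ 2)
  + (C (I ∪ J)) ^ 2 + (C (J ∪ K)) ^ 2 + acm (C (I ∪ J)) (C (J ∪ K))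
  + ((1 : ℂ)/2) • ((C I + C J + C K + C (I ∪ J ∪ K)) *
      (acm (C (I ∪ J)) (C (J ∪ K)) - 2 * C (I ∪ J) - 2 * C (J ∪ K)))
  - (C I - C (I ∪ J ∪ K)) * (C J - C K) * C (I ∪ J)
  - (C I - C J) * (C (I ∪ J ∪ K) - C K) * C (J ∪ K)
  + (C I * C K - C (I ∪ J ∪ K) * C J) * (C (I ∪ J ∪ K) - C I + C J - C K)
  + (C I + C K) * (C (I ∪ J ∪ K) + C J)

/-- Relations (R5'), for pairwise distinct `i, j, k, l`. -/
def RelR5' (C : Finset (Fin 4) → A) : Prop :=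
  ∀ i j k l : Fin 4, i ≠ j → i ≠ k → i ≠ l → j ≠ k → j ≠ l → k ≠ l →
    2 * C {j} * cm (C {i, k}) (C {k, l})
    + (C {i, j} - C {i} - C {j}) * cm (C {k, l}) (C {j, k})
    + (C {j, l} - C {j} - C {l}) * cm (C {j, k}) (C {i, k})
    - (C {j, k} - C {j} - C {k}) * cm (C {i, j}) (C {j, l}) = 0

set_option linter.unusedSectionVars false

theorem of_half_smul (x y : A) (h : ((1 : ℂ)/2) • x = y) : x = 2 * y := by
  rw [← h, two_mul, ← add_smul]; norm_num

theorem half_smul_iff (x y : A) : ((1 : ℂ)/2) • x = y ↔ x = 2 * y := by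
  refine ⟨of_half_smul x y, fun h => ?_⟩
  rw [h, two_mul, smul_add, ← add_smul]; norm_num

theorem cm_mul_r (a b c : A) : cm a (b * c) = cm a b * c + b * cm a c := by
  unfold cm; noncomm_ring

theorem cm_add_r (a b c : A) : cm a (b + c) = cm a b + cm a c := by
  unfold cm; noncomm_ring

theorem cm_sub_r (a b c : A) : cm a (b - c) = cm a b - cm a c := by
  unfold cm; noncomm_ring

theorem cm_two (a : A) : cm a 2 = 0 := by
  unfold cm; noncomm_ring

theorem cm_swap (a b : A) : cm a b = - cm b a := by
  unfold cm; noncomm_ring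

theorem cm_jacobi (a b c : A) : cm (cm a b) c = cm a (cm b c) - cm b (cm a c) := by
  unfold cm; noncomm_ring

/-- The core equivalence, in terms of the shifted elements `p_ab = C_ab - C_a - C_b`. -/
theorem core (cj ck pij pik pil pjk pjl pkl Gijk Gjkl Gijl Gikl : A)
    (hcj : cm pij cj = 0) (hck : cm pij ck = 0)
    (dij : cm pij pkl = 0) (djk : cm pjk pil = 0)
    (e1 : cm pij pjk = Gijk) (e2 : cm pjk pkl = Gjkl) (e3 : cm pij pjl = Gijl)
    (e4 : cm pjk pik = Gijk) (e5 : cm pjk pjl = -Gjkl)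
    (r3 : cm pjk Gjkl = 2 * (pkl * (pjk + 2 * cj) - (pjk + 2 * ck) * pjl))
    (r4a : cm pij Gjkl = 2 * (pil * pjk - pjl * pik))
    (r4b : cm pik Gjkl - cm pjk Gikl - cm pjk Gijl + cm pjl Gijk = 0) :
    cm Gijk Gjkl + (Gijl + Gikl) * pjk * 2 =
     2 * (-(2 * ck * Gijl) - pik * Gjkl + pkl * Gijk + pjk * Gikl) := by
  have hJ : cm Gijk Gjkl = cm pij (cm pjk Gjkl) - cm pjk (cm pij Gjkl) := by
    rw [← e1, cm_jacobi]
  rw [r3, r4a] at hJ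
  simp only [cm_mul_r, cm_add_r, cm_sub_r, cm_two, hcj, hck, dij, djk, e1, e3, e4, e5] at hJ
  have h5 : cm pjk pjk = 0 := by simp [cm]
  simp only [h5, zero_mul, mul_zero, add_zero, zero_add, zero_sub] at hJ
  rw [hJ]
  rw [← sub_eq_zero]
  have r4c := congrArg (fun x => 2 * x) r4b
  simp only [mul_zero] at r4c
  refine Eq.trans ?_ r4c
  unfold cm
  noncomm_ring

theorem r4_shift (ci cj ck cl x y z w : A)
    (a1 : x * cj = cj * x) (a2 : x * cl = cl * x) (a3 : z * cj = cj * z) (a4 : z * ck = ck * z)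
    (a5 : ck * cl = cl * ck) (a6 : ck * cj = cj * ck) (a7 : cl * cj = cj * cl) :
    x * y - z * w + (ci + cl) * w + (cj + ck) * z - (cj + cl) * x - (ci + ck) * y
      + (ci - cj) * (cl - ck) =
    (x - ci - ck) * (y - cj - cl) - (z - ci - cl) * (w - cj - ck) := by
  simp only [mul_sub, sub_mul, mul_add, add_mul, a1, a2, a3, a4, a5, a6, a7]
  abel

theorem r3_shift (cj ck cl x y z : A)
    (a1 : x * cj = cj * x) (a2 : x * ck = ck * x) (a3 : x * cl = cl * x)
    (b1 : y * cj = cj * y) (b2 : y * ck = ck * y) (b3 : y * cl = cl * y)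
    (c1 : z * cj = cj * z) (c2 : z * ck = ck * z) (c3 : z * cl = cl * z)
    (a5 : ck * cl = cl * ck) (a6 : ck * cj = cj * ck) (a7 : cl * cj = cj * cl) :
    x * y - y * z + (cj - ck) * (z + y + x - cl - cj - ck - cl) =
    (x - ck - cl) * ((y - cj - ck) + 2 * cj) - ((y - cj - ck) + 2 * ck) * (z - cj - cl) := by
  simp only [two_mul, mul_sub, sub_mul, mul_add, add_mul, a1, a2, a3, b1, b2, b3, c1, c2, c3,
    a5, a6, a7]
  abel

/-- Shifted generator. -/
def pp (C : Finset (Fin 4) → A) (i j : Fin 4) : A := C {i, j} - C {i} - C {j}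

theorem pp_symm (C : Finset (Fin 4) → A) (i j : Fin 4) : pp C i j = pp C j i := by
  unfold pp; rw [Finset.pair_comm]; abel

theorem comm_single (C : Finset (Fin 4) → A) (h1 : RelR1 C) (I : Finset (Fin 4)) (j : Fin 4) :
    C I * C {j} = C {j} * C I := by
  have := h1 I {j} (by
    by_cases h : j ∈ I
    · right; right; simpa using h
    · left; ext x; simp only [mem_inter, mem_singleton, notMem_empty, iff_false]
      rintro ⟨h1, rfl⟩; exact h h1)
  exact sub_eq_zero.mp this

theorem cm_pp (C : Finset (Fin 4) → A) (h1 : RelR1 C) (i j k l : Fin 4) :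
    cm (pp C i j) (pp C k l) = cm (C {i, j}) (C {k, l}) := by
  have hc := comm_single C h1
  unfold pp cm
  simp only [mul_sub, sub_mul, hc {i, j}, hc {k, l}, hc {i} j, hc {k} i, hc {l} i, hc {k} j,
    hc {l} j]
  abel

theorem cm_pp_left (C : Finset (Fin 4) → A) (h1 : RelR1 C) (i j : Fin 4) (x y : A)
    (hx : ∀ i, x * C {i} = C {i} * x) (hy : ∀ i, y * C {i} = C {i} * y) :
    cm (pp C i j) (cm x y) = cm (C {i, j}) (cm x y) := by
  have h : ∀ i, cm x y * C {i} = C {i} * cm x y := by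
    intro i
    unfold cm
    rw [sub_mul, mul_sub, mul_assoc, hy, ← mul_assoc, hx, mul_assoc, mul_assoc, hx,
      ← mul_assoc y, hy, mul_assoc]
  generalize cm x y = g at h
  unfold pp cm
  simp only [mul_sub, sub_mul, h]
  abel

theorem triple (C : Finset (Fin 4) → A) (h2 : RelR2 C) (i j k : Fin 4)
    (hij : i ≠ j) (hik : i ≠ k) (hjk : j ≠ k) :
    C ({i} ∪ {j} ∪ {k}) = C {i, j} + C {j, k} + C {i, k} - C {i} - C {j} - C {k} := by
  have e : ({i} ∪ {j} ∪ {k} : Finset (Fin 4)) = {i, j, k} := by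
    ext x; simp [or_assoc]
  have hc : ({i, j, k} : Finset (Fin 4)).card = 3 := Finset.card_eq_three.mpr
    ⟨i, j, k, hij, hik, hjk, rfl⟩
  have h := h2 {i, j, k} (by rw [hc])
  rw [hc] at h
  have s1 : ({i, j, k} : Finset (Fin 4)) \ {i} = {j, k} := by
    ext x; simp only [mem_sdiff, mem_insert, mem_singleton]; grind
  have s2 : ({i, j, k} : Finset (Fin 4)) \ {j} = {i, k} := by
    ext x; simp only [mem_sdiff, mem_insert, mem_singleton]; grind
  have s3 : ({i, j, k} : Finset (Fin 4)) \ {k} = {i, j} := by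
    ext x; simp only [mem_sdiff, mem_insert, mem_singleton]; grind
  have t : ∀ f : Fin 4 → A, ∑ x ∈ ({i, j, k} : Finset (Fin 4)), f x = f i + (f j + f k) := by
    intro f
    rw [Finset.sum_insert (by simp [hij, hik]), Finset.sum_pair hjk]
  rw [e, h, t, t, s1, s2, s3, Finset.sum_pair hjk, Finset.sum_pair hik, Finset.sum_pair hij,
    Finset.pair_comm j i, Finset.pair_comm k i, Finset.pair_comm k j]
  norm_num
  module

theorem r4_pp (C : Finset (Fin 4) → A) (h1 : RelR1 C) (h4 : RelR4 C) (i j k l : Fin 4)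
    (hij : i ≠ j) (hik : i ≠ k) (hil : i ≠ l) (hjk : j ≠ k) (hjl : j ≠ l) (hkl : k ≠ l) :
    cm (pp C k l) (cm (C {i, j}) (C {j, k})) =
      2 * (pp C i k * pp C j l - pp C i l * pp C j k) := by
  have hc := comm_single C h1
  rw [cm_pp_left C h1 _ _ _ _ (hc _) (hc _), of_half_smul _ _ (h4 i j k l hij hik hil hjk hjl hkl)]
  congr 1
  exact r4_shift _ _ _ _ _ _ _ _ (hc _ _) (hc _ _) (hc _ _) (hc _ _) (hc _ _) (hc _ _) (hc _ _)

theorem r3_pp (C : Finset (Fin 4) → A) (h1 : RelR1 C) (h2 : RelR2 C) (h3 : RelR3 C)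
    (l j k : Fin 4) (hlj : l ≠ j) (hlk : l ≠ k) (hjk : j ≠ k) :
    cm (pp C j k) (cm (C {l, j}) (C {j, k})) =
      2 * (pp C k l * (pp C j k + 2 * C {j}) - (pp C j k + 2 * C {k}) * pp C j l) := by
  have hc := comm_single C h1
  rw [cm_pp_left C h1 _ _ _ _ (hc _) (hc _)]
  have h := (h3 {l} {j} {k} (by simp) (by simp) (by simp) (by simpa) (by simpa) (by simpa)).2.2
  rw [triple C h2 l j k hlj hlk hjk] at h
  simp only [← Finset.insert_eq] at h
  rw [h]
  have := r3_shift (C {j}) (C {k}) (C {l}) (C {l, k}) (C {j, k}) (C {l, j})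
    (hc _ _) (hc _ _) (hc _ _) (hc _ _) (hc _ _) (hc _ _) (hc _ _) (hc _ _) (hc _ _) (hc _ _)
    (hc _ _) (hc _ _)
  unfold pp
  rw [Finset.pair_comm k l, Finset.pair_comm j l, ← this]
  noncomm_ring

theorem cyc (C : Finset (Fin 4) → A) (h3 : RelR3 C)
    (i j k : Fin 4) (hij : i ≠ j) (hik : i ≠ k) (hjk : j ≠ k) :
    cm (C {j, k}) (C {k, i}) = cm (C {i, j}) (C {j, k}) ∧
    cm (C {k, i}) (C {i, j}) = cm (C {i, j}) (C {j, k}) ∧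
    cm (C {k, j}) (C {j, i}) = -cm (C {i, j}) (C {j, k}) := by
  have h := h3 {i} {j} {k} (by simp) (by simp) (by simp) (by simpa) (by simpa) (by simpa)
  simp only [← Finset.insert_eq] at h
  rw [Finset.pair_comm k i, Finset.pair_comm k j, Finset.pair_comm j i]
  exact ⟨h.1.symm, (h.1.trans h.2.1).symm, cm_swap _ _⟩

theorem key (C : Finset (Fin 4) → A)
    (h1 : RelR1 C) (h2 : RelR2 C) (h3 : RelR3 C) (h4 : RelR4 C) (i j k l : Fin 4)
    (hij : i ≠ j) (hik : i ≠ k) (hil : i ≠ l) (hjk : j ≠ k) (hjl : j ≠ l) (hkl : k ≠ l) :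
    cm (cm (C {i, j}) (C {j, k})) (cm (C {j, k}) (C {k, l}))
      + (cm (C {i, j}) (C {j, l}) + cm (C {i, k}) (C {k, l})) * pp C j k * 2 =
    2 * (-(2 * C {k} * cm (C {i, j}) (C {j, l})) - pp C i k * cm (C {j, k}) (C {k, l})
      + pp C k l * cm (C {i, j}) (C {j, k}) + pp C j k * cm (C {i, k}) (C {k, l})) := by
  have hc := comm_single C h1
  have hpc : ∀ a b c, cm (pp C a b) (C {c}) = 0 := by
    intro a b c
    unfold cm pp
    simp only [sub_mul, mul_sub, hc _ c]
    abel
  have hd : ∀ a b c d : Fin 4, a ≠ c → a ≠ d → b ≠ c → b ≠ d → cm (pp C a b) (pp C c d) = 0 := by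
    intro a b c d hac had hbc hbd
    rw [cm_pp C h1]
    apply h1
    left
    ext x
    simp only [mem_inter, mem_insert, mem_singleton, notMem_empty, iff_false]
    grind
  have hdjk := hd j k i l hij.symm hjl hik.symm hkl
  obtain ⟨jkl1, jkl2, jkl3⟩ := cyc C h3 j k l hjk hjl hkl
  obtain ⟨ijk1, ijk2, ijk3⟩ := cyc C h3 i j k hij hik hjk
  obtain ⟨ijl1, ijl2, ijl3⟩ := cyc C h3 i j l hij hil hjl
  obtain ⟨ikl1, ikl2, ikl3⟩ := cyc C h3 i k l hik hil hkl
  refine core (C {j}) (C {k}) (pp C i j) (pp C i k) (pp C i l) (pp C j k) (pp C j l) (pp C k l)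
    _ _ _ _ (hpc _ _ _) (hpc _ _ _) (hd _ _ _ _ hik hil hjk hjl) hdjk
    (cm_pp C h1 _ _ _ _) (cm_pp C h1 _ _ _ _) (cm_pp C h1 _ _ _ _) ?_ ?_ ?_ ?_ ?_
  · rw [pp_symm C i k, cm_pp C h1, ijk1]
  · rw [pp_symm C j l, cm_pp C h1, cm_swap, jkl2]
  · rw [← jkl2, Finset.pair_comm l j]
    have := r3_pp C h1 h2 h3 l j k hjl.symm hkl.symm hjk
    rwa [Finset.pair_comm l j] at this
  · have := r4_pp C h1 h4 l k j i hkl.symm hjl.symm hil.symm hjk.symm hik.symm hij.symm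
    rw [jkl3, pp_symm C j i, pp_symm C l j, pp_symm C k i, pp_symm C l i, pp_symm C k j] at this
    have e : ∀ a b : A, cm a (-b) = -cm a b := by intro a b; unfold cm; noncomm_ring
    rw [e] at this
    rw [neg_eq_iff_eq_neg.mp this]
    noncomm_ring
  · have q1 := r4_pp C h1 h4 l j k i hjl.symm hkl.symm hil.symm hjk hij.symm hik.symm
    have q2 := r4_pp C h1 h4 l i k j hil.symm hkl.symm hjl.symm hik hij hjk.symm
    have q3 := r4_pp C h1 h4 l i j k hil.symm hjl.symm hkl.symm hij hik hjk
    have q4 := r4_pp C h1 h4 k i j l hik.symm hjk.symm hkl hij hil hjl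
    rw [jkl2] at q1
    rw [ikl2] at q2
    rw [ijl2] at q3
    rw [ijk2] at q4
    rw [pp_symm C k i] at q1
    rw [pp_symm C k j] at q2
    rw [q1, q2, q3, q4, pp_symm C l k, pp_symm C l i, pp_symm C l j, pp_symm C j i, pp_symm C k j,
      ← mul_zero (2 : A)]
    refine Eq.trans ?_ (congrArg (fun x => 2 * x) hdjk)
    unfold cm
    noncomm_ring

/-- Modulo the relations (R1)–(R4), the family of relations (R5) is equivalent to the
family (R5'); since this holds for an arbitrary algebra `A` and an arbitrary family `C`,
the identity map on the generators induces an isomorphism `R(4) ≅ R'(4)` of the two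
presented algebras. -/
theorem stmt8 (C : Finset (Fin 4) → A) (hC0 : C ∅ = 0)
    (h1 : RelR1 C) (h2 : RelR2 C) (h3 : RelR3 C) (h4 : RelR4 C) :
    RelR5 C ↔ RelR5' C := by
  have two_cancel : ∀ x : A, 2 * x = 0 → x = 0 := by
    intro x hx
    have h := (half_smul_iff (2 * x) x).mpr rfl
    rw [← h, hx, smul_zero]
  have main : ∀ i j k l : Fin 4, i ≠ j → i ≠ k → i ≠ l → j ≠ k → j ≠ l → k ≠ l →
      ((((1 : ℂ)/2) • cm (cm (C {i, j}) (C {j, k})) (cm (C {j, k}) (C {k, l})) =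
      -((cm (C {i, j}) (C {j, l}) + cm (C {i, k}) (C {k, l})) * (C {j, k} - C {j} - C {k})))
      ↔ 2 * C {k} * cm (C {i, j}) (C {j, l})
        + (C {i, k} - C {i} - C {k}) * cm (C {j, l}) (C {k, j})
        + (C {k, l} - C {k} - C {l}) * cm (C {k, j}) (C {i, j})
        - (C {k, j} - C {k} - C {j}) * cm (C {i, k}) (C {k, l}) = 0) := by
    intro i j k l hij hik hil hjk hjl hkl
    have K := key C h1 h2 h3 h4 i j k l hij hik hil hjk hjl hkl
    have e1 : cm (C {j, l}) (C {k, j}) = cm (C {j, k}) (C {k, l}) := by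
      rw [← (cyc C h3 j k l hjk hjl hkl).2.1, Finset.pair_comm l j, Finset.pair_comm k j]
    have e2 : cm (C {k, j}) (C {i, j}) = - cm (C {i, j}) (C {j, k}) := by
      rw [← (cyc C h3 i j k hij hik hjk).2.2, Finset.pair_comm i j]
    have e3 : C {k, j} - C {k} - C {j} = pp C j k := pp_symm C k j
    rw [half_smul_iff, e1, e2, e3]
    change _ = 2 * (-(_ * pp C j k)) ↔ _ + pp C i k * _ + pp C k l * _ - _ = 0
    constructor
    · intro h
      apply two_cancel
      rw [h] at K
      rw [← neg_eq_zero]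
      refine Eq.trans ?_ (K.symm.trans ?_)
      · noncomm_ring
      · noncomm_ring
    · intro h
      have h' := congrArg (fun x => -(2 * x)) h
      simp only [mul_zero, neg_zero] at h'
      rw [← sub_eq_zero]
      refine Eq.trans ?_ ((K.trans ?_).trans h')
      · noncomm_ring
      · noncomm_ring
  constructor
  · intro h i j k l hij hik hil hjk hjl hkl
    exact (main i k j l hik hij hil hjk.symm hkl hjl).mp
      (h i k j l hik hij hil hjk.symm hkl hjl)
  · intro h i j k l hij hik hil hjk hjl hkl
    exact (main i j k l hij hik hil hjk hjl hkl).mpr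
      (h i k j l hik hij hil hjk.symm hkl hjl)
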